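/- Let V be a real inner product space of dimension 2 and let u, v, w be three nonzero vectors of V. Then either the three non-oriented angles satisfy angle(u,v) + angle(v,w) + angle(w,u) = 2π, or one of the three angles equals the sum of the other two (i.e., angle(u,w) = angle(u,v) + angle(v,w), or angle(u,v) = angle(u,w) + angle(w,v), or angle(v,w) = angle(v,u) + angle(u,w)). -/

import Mathlib

open InnerProductGeometry Real

/-- For three nonzero vectors `u, v, w` in a 2-dimensional real inner
product space, either the three non-oriented angles sum to `2π`, or one of them is the
sum of the other two. -/
theorem stmt_11 (V : Type*) [NormedAddCommGroup V] [InnerProductSpace ℝ V]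
    (hdim : Module.finrank ℝ V = 2)
    (u v w : V) (hu : u ≠ 0) (hv : v ≠ 0) (hw : w ≠ 0) :
    angle u v + angle v w + angle w u = 2 * π
    ∨ angle u w = angle u v + angle v w
    ∨ angle u v = angle u w + angle w v
    ∨ angle v w = angle v u + angle u w := by
  haveI : Fact (Module.finrank ℝ V = 2) := ⟨hdim⟩
  haveI : FiniteDimensional ℝ V := Module.finite_of_finrank_eq_succ hdim
  let o : Orientation ℝ V (Fin 2) := (Module.finBasisOfFinrankEq ℝ V hdim).orientation
  have hsum := o.oangle_add_cyc3 hu hv hw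
  have ha := o.angle_eq_abs_oangle_toReal hu hv
  have hb := o.angle_eq_abs_oangle_toReal hv hw
  have hc := o.angle_eq_abs_oangle_toReal hw hu
  rw [angle_comm u w, angle_comm w v, angle_comm v u, ha, hb, hc]
  have a1 := (o.oangle u v).neg_pi_lt_toReal
  have a2 := (o.oangle u v).toReal_le_pi
  have b1 := (o.oangle v w).neg_pi_lt_toReal
  have b2 := (o.oangle v w).toReal_le_pi
  have c1 := (o.oangle w u).neg_pi_lt_toReal
  have c2 := (o.oangle w u).toReal_le_pi
  rw [← (o.oangle u v).coe_toReal, ← (o.oangle v w).coe_toReal,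
    ← (o.oangle w u).coe_toReal, ← Real.Angle.coe_add, ← Real.Angle.coe_add,
    ← Real.Angle.coe_zero, Real.Angle.angle_eq_iff_two_pi_dvd_sub] at hsum
  obtain ⟨k, hk⟩ := hsum
  generalize (o.oangle u v).toReal = a at *
  generalize (o.oangle v w).toReal = b at *
  generalize (o.oangle w u).toReal = c at *
  have hpi := Real.pi_pos
  have k1 : k < 2 := by
    by_contra! h
    have : (2 : ℝ) ≤ k := by exact_mod_cast h
    nlinarith
  have k2 : -2 < k := by
    by_contra! h
    have : (k : ℝ) ≤ -2 := by exact_mod_cast h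
    nlinarith
  have k3 : k = -1 ∨ k = 0 ∨ k = 1 := by omega
  rcases k3 with rfl | rfl | rfl
  · left
    push_cast at hk
    rw [abs_of_nonpos (by linarith), abs_of_nonpos (by linarith), abs_of_nonpos (by linarith)]
    linarith
  · right
    push_cast at hk
    rcases abs_cases a with ⟨h1, _⟩ | ⟨h1, _⟩ <;> rcases abs_cases b with ⟨h2, _⟩ | ⟨h2, _⟩ <;>
      rcases abs_cases c with ⟨h3, _⟩ | ⟨h3, _⟩ <;> rw [h1, h2, h3] <;>
      first
      | (left; linarith)
      | (right; left; linarith)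
      | (right; right; linarith)
  · left
    push_cast at hk
    rw [abs_of_nonneg (by linarith), abs_of_nonneg (by linarith), abs_of_nonneg (by linarith)]
    linarith
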